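/- arXiv:1603.00780 — 4 statements merged into one kernel-verified Lean document; each statement's English description precedes it below -/
import Mathlib

section
/- Let A be a structurable division algebra over a field k with char(k) ≠ 2 and char(k) ≠ 3, and let 0 ≠ x ∈ A with conjugate inverse x̂. Then q_{x̂}(q_x(s)) = s and q_x(q_{x̂}(s)) = s for all s ∈ S; in particular q_x : S → S is a bijection with inverse q_{x̂}. -/
/-- The triple product `{x,y,z} := (x·ȳ)·z + (z·ȳ)·x − (z·x̄)·y` of a (not necessarily
associative or commutative) unital algebra `A` equipped with an involution `bar`. -/
def strTrip {A : Type*} [NonAssocRing A] (bar : A → A) (x y z : A) : A :=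
  x * bar y * z + z * bar y * x - z * bar x * y

/-- `ψ(x,y) := x·ȳ − y·x̄`. -/
def strPsi {A : Type*} [NonAssocRing A] (bar : A → A) (x y : A) : A :=
  x * bar y - y * bar x

/-- `q_x(s) := (1/6)·ψ(x, U_x(s·x))`, where `U_x y := {x,y,x}`. -/
noncomputable def strQ (k : Type*) [Field k] {A : Type*} [NonAssocRing A] [Module k A]
    (bar : A → A) (x s : A) : A :=
  (6 : k)⁻¹ • strPsi bar x (strTrip bar x (s * x) x)

/-- `(A, bar)` is a structurable algebra over `k`: `bar` is a `k`-linear involutive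
anti-automorphism of `A`, and the operator identity
`[V_{x,y}, V_{z,w}] = V_{{x,y,z},w} − V_{z,{y,x,w}}` holds, where
`V_{x,y} z := strTrip bar x y z`. -/
def IsStructurable (k : Type*) [Field k] (A : Type*) [NonAssocRing A] [Module k A]
    (bar : A → A) : Prop :=
  (∀ x y : A, bar (x + y) = bar x + bar y) ∧
  (∀ (c : k) (x : A), bar (c • x) = c • bar x) ∧
  (∀ x y : A, bar (x * y) = bar y * bar x) ∧
  (∀ x : A, bar (bar x) = x) ∧
  (∀ x y z w a : A,
    strTrip bar x y (strTrip bar z w a) - strTrip bar z w (strTrip bar x y a)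
      = strTrip bar (strTrip bar x y z) w a - strTrip bar z (strTrip bar y x w) a)

/-- `A` is a (conjugate) division algebra: every nonzero `u ∈ A` has a conjugate
inverse `v`, i.e. `V_{u,v} = id`. -/
def IsConjDivision {A : Type*} [NonAssocRing A] (bar : A → A) : Prop :=
  ∀ u : A, u ≠ 0 → ∃ v : A, ∀ z : A, strTrip bar u v z = z


/-- Second Kantor identity specialised at `z = 1`, for skew `s` (up to the factor 12). -/
theorem str_kantor_aux {A : Type*} [NonAssocRing A] (bar : A → A)
    (badd : ∀ x y : A, bar (x + y) = bar x + bar y)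
    (bmul : ∀ x y : A, bar (x * y) = bar y * bar x)
    (bbar : ∀ x : A, bar (bar x) = x)
    (hV : ∀ x y z w a : A,
      strTrip bar x y (strTrip bar z w a) - strTrip bar z w (strTrip bar x y a)
      = strTrip bar (strTrip bar x y z) w a - strTrip bar z (strTrip bar y x w) a)
    (s y w : A) (hs : bar s = -s) :
    (12 : ℤ) • (s * strTrip bar y w 1 + strTrip bar w y s - strPsi bar (s * y) w) = 0 := by
  have b0 : bar 0 = 0 := by simpa using badd 0 0
  have bneg : ∀ x, bar (-x) = - bar x := fun x => by
    rw [eq_neg_iff_add_eq_zero, ← badd]; simp [b0]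
  have bsub : ∀ x y, bar (x - y) = bar x - bar y := fun x y => by
    rw [sub_eq_add_neg, badd, bneg, sub_eq_add_neg]
  have b1 : bar 1 = 1 := by
    have := bmul (bar 1) 1
    rw [mul_one, bbar, mul_one] at this
    exact this.symm
  have h1 := hV 1 w y 1 s
  have h2 := congrArg bar (hV w 1 (bar y) 1 s)
  have h3 := hV s 1 y 1 w
  have h4 := congrArg bar (hV s 1 1 (bar y) (bar w))
  have h5 := hV (bar y) 1 1 s w
  have h6 := congrArg bar (hV w 1 s 1 (bar y))
  have h7 := hV w (bar y) 1 s 1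
  have h8 := hV y w s 1 1
  have h9 := congrArg bar (hV 1 y w 1 s)
  have h10 := congrArg bar (hV 1 s (bar w) 1 y)
  have h11 := hV (bar w) (bar y) 1 s 1
  simp only [strTrip, strPsi, badd, bsub, bneg, bmul, bbar, b1, hs, mul_one, one_mul, mul_add,
    add_mul, mul_sub, sub_mul, neg_mul, mul_neg, neg_neg] at h1 h2 h3 h4 h5 h6 h7 h8 h9 h10 h11 ⊢
  linear_combination (norm := skip) (4 : ℤ) • h1 - (8 : ℤ) • h2 + (2 : ℤ) • h3 - (2 : ℤ) • h4
    - (2 : ℤ) • h5 + (4 : ℤ) • h6 - (1 : ℤ) • h7 - (16 : ℤ) • h8 - (8 : ℤ) • h9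
    + (2 : ℤ) • h10 + (4 : ℤ) • h11
  abel

theorem str_Q_aux {k : Type*} [Field k] {A : Type*} [NonAssocRing A] [Module k A]
    [SMulCommClass k A A] [IsScalarTower k A A]
    (h2 : (2 : k) ≠ 0) (h3 : (3 : k) ≠ 0)
    (bar : A → A) (hstr : IsStructurable k A bar)
    (x y : A) (hxy : ∀ z : A, strTrip bar x y z = z) (hyx : ∀ z : A, strTrip bar y x z = z)
    (s : A) (hs : bar s = -s) : strQ k bar y (strQ k bar x s) = s := by
  obtain ⟨badd, bsmul, bmul, bbar, hV⟩ := hstr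
  have h12 : (12 : k) ≠ 0 := by
    have : (12 : k) = 2 * 2 * 3 := by norm_num
    rw [this]; exact mul_ne_zero (mul_ne_zero h2 h2) h3
  have h6 : (6 : k) ≠ 0 := by
    have : (6 : k) = 2 * 3 := by norm_num
    rw [this]; exact mul_ne_zero h2 h3
  have bneg : ∀ x, bar (-x) = - bar x := fun x => by
    have := bsmul (-1) x; simpa using this
  -- linearity facts
  have psi_smul : ∀ (c : k) (a b : A), strPsi bar a (c • b) = c • strPsi bar a b := by
    intro c a b
    simp only [strPsi, bsmul, mul_smul_comm, smul_mul_assoc, smul_sub]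
  have T_smul2 : ∀ (c : k) (a b d : A), strTrip bar a (c • b) d = c • strTrip bar a b d := by
    intro c a b d
    simp only [strTrip, bsmul, mul_smul_comm, smul_mul_assoc, smul_sub, smul_add]
  have T_smul1 : ∀ (c : k) (a b d : A), strTrip bar (c • a) b d = c • strTrip bar a b d := by
    intro c a b d
    simp only [strTrip, bsmul, mul_smul_comm, smul_mul_assoc, smul_sub, smul_add]
  have K : ∀ a b d : A, strPsi bar a b * d = strTrip bar a d b - strTrip bar b d a := by
    intro a b d
    simp only [strTrip, strPsi, sub_mul]; abel
  have psi_swap : ∀ a b : A, strPsi bar a b = - strPsi bar b a := by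
    intro a b; simp only [strPsi]; abel
  -- ψ(s x, y) = 2 s
  have e4 : strPsi bar (s * x) y = (2 : k) • s := by
    have h := str_kantor_aux bar badd bmul bbar hV s x y hs
    rw [hxy, hyx, mul_one] at h
    have h' : (12 : k) • (s + s - strPsi bar (s * x) y) = 0 := by
      rw [← h, ← Int.cast_smul_eq_zsmul k]; norm_num
    have h'' := (smul_eq_zero.mp h').resolve_left h12
    rw [two_smul]; exact (sub_eq_zero.mp h'').symm
  have e3 : strTrip bar (s * x) x y = (3 : k) • (s * x) := by
    have h := K (s * x) y x
    rw [e4, hyx, smul_mul_assoc] at h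
    rw [eq_add_of_sub_eq h.symm]; module
  set u := strTrip bar x (s * x) x with hu
  have e2 : ∀ z, strTrip bar u y z = (3 : k) • strTrip bar x (s * x) z := by
    intro z
    have h := hV x (s * x) x y z
    rw [hxy, hxy, sub_self, e3, T_smul2] at h
    exact sub_eq_zero.mp h.symm
  have e1 : strPsi bar x u * y = (-2 : k) • u := by
    rw [K, hxy, e2, ← hu]; module
  have e5 : strTrip bar y u y = (9 : k) • (s * x) := by
    have h := hV (s * x) x y x y
    rw [hyx, hyx, sub_self, e3, T_smul1, e3, ← hu] at h
    rw [← sub_eq_zero.mp h.symm]; module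
  have e6 : strPsi bar y (s * x) = (-2 : k) • s := by
    rw [psi_swap, e4]; module
  unfold strQ
  rw [← hu, smul_mul_assoc, e1, T_smul2, T_smul2, psi_smul, psi_smul, e5, psi_smul, e6]
  simp only [smul_smul]
  have : (6 : k)⁻¹ * ((6 : k)⁻¹ * (-2 * (9 * -2))) = 1 := by
    field_simp; norm_num
  rw [show ∀ c : k, c = 1 → c • s = s from fun c hc => by rw [hc, one_smul]]
  linear_combination this

theorem stmt11 {k : Type*} [Field k] {A : Type*} [NonAssocRing A] [Module k A]
    [SMulCommClass k A A] [IsScalarTower k A A] [FiniteDimensional k A] [Nontrivial A]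
    (h2 : (2 : k) ≠ 0) (h3 : (3 : k) ≠ 0)
    (bar : A → A) (hstr : IsStructurable k A bar) (hdiv : IsConjDivision bar)
    (x : A) (hx0 : x ≠ 0) (xhat : A) (hxhat : ∀ z : A, strTrip bar x xhat z = z) :
    (∀ s : A, bar s = -s →
      strQ k bar xhat (strQ k bar x s) = s ∧ strQ k bar x (strQ k bar xhat s) = s) ∧
    Set.BijOn (strQ k bar x) {s : A | bar s = -s} {s : A | bar s = -s} := by
  have hstr' := hstr
  obtain ⟨badd, bsmul, bmul, bbar, hV⟩ := hstr'
  have bneg : ∀ x, bar (-x) = - bar x := fun x => by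
    have := bsmul (-1) x; simpa using this
  have bsub : ∀ x y, bar (x - y) = bar x - bar y := fun x y => by
    rw [sub_eq_add_neg, badd, bneg, sub_eq_add_neg]
  have b1 : bar 1 = 1 := by
    have := bmul (bar 1) 1
    rw [mul_one, bbar, mul_one] at this
    exact this.symm
  have hyx : ∀ z, strTrip bar xhat x z = z := by
    intro w
    have h := hV x xhat 1 w 1
    rw [hxhat, hxhat, sub_self] at h
    set w' := strTrip bar xhat x w
    have h' : (2 : k) • bar (w - w') = w - w' := by
      simp only [strTrip, b1, one_mul, mul_one] at h
      rw [bsub, two_smul, ← sub_eq_zero, h]; abel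
    have h'' : (2 : k) • (w - w') = bar (w - w') := by
      have := congrArg bar h'
      rwa [bsmul, bbar] at this
    have h3' : (3 : k) • (w - w') = 0 := by
      rw [← h'', smul_smul] at h'
      calc (3 : k) • (w - w') = (2 * 2 : k) • (w - w') - (w - w') := by module
        _ = 0 := by rw [h', sub_self]
    exact (sub_eq_zero.mp ((smul_eq_zero.mp h3').resolve_left h3)).symm
  have main : ∀ s : A, bar s = -s →
      strQ k bar xhat (strQ k bar x s) = s ∧ strQ k bar x (strQ k bar xhat s) = s :=
    fun s hs => ⟨str_Q_aux h2 h3 bar hstr x xhat hxhat hyx s hs,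
      str_Q_aux h2 h3 bar hstr xhat x hyx hxhat s hs⟩
  have skew : ∀ a s : A, bar (strQ k bar a s) = - strQ k bar a s := by
    intro a s
    simp only [strQ, strPsi, bsmul, bsub, bmul, bbar]
    rw [← smul_neg, neg_sub]
  refine ⟨main, fun s _ => skew x s, ?_, ?_⟩
  · intro s hs t ht hst
    rw [← (main s hs).1, ← (main t ht).1, hst]
  · intro s hs
    exact ⟨strQ k bar xhat s, skew xhat s, (main s hs).2⟩
end

section
/- Let A be a structurable division algebra over a field k with char(k) ≠ 2 and char(k) ≠ 3, let 0 ≠ x ∈ A with conjugate inverse x̂, and let 0 ≠ s ∈ S with conjugate inverse ŝ ∈ S. Then q_x(s) ≠ 0 and its conjugate inverse is q_{x̂}(ŝ); equivalently, q_x(s)·(q_{x̂}(ŝ)·z) = q_{x̂}(ŝ)·(q_x(s)·z) = −z for all z ∈ A. -/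
set_option linter.unusedSectionVars false
set_option linter.unusedSimpArgs false

namespace StrAux

variable {k : Type*} [Field k] {A : Type*} [NonAssocRing A] [Module k A]
    [SMulCommClass k A A] [IsScalarTower k A A] {bar : A → A}

/-- cancel 6 -/
theorem cancel6 (h2 : (2 : k) ≠ 0) (h3 : (3 : k) ≠ 0) {a : A} (h : (6 : ℤ) • a = 0) : a = 0 := by
  have h6 : (6 : k) ≠ 0 := by
    have : (6 : k) = 2 * 3 := by norm_num
    rw [this]; exact mul_ne_zero h2 h3
  have : (6 : k) • a = 0 := by
    rw [← h, ← Int.cast_smul_eq_zsmul k]; norm_num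
  exact (smul_eq_zero.mp this).resolve_left h6

theorem cancel2 (h2 : (2 : k) ≠ 0) {a b : A} (h : a + a = b + b) : a = b := by
  have : (2 : k) • a = (2 : k) • b := by simpa [two_smul] using h
  exact smul_right_injective A h2 this

theorem bar_zero (h : IsStructurable k A bar) : bar 0 = 0 := by
  have := h.1 0 0; simpa using this

theorem bar_neg (h : IsStructurable k A bar) (a : A) : bar (-a) = - bar a := by
  have := h.1 a (-a)
  rw [add_neg_cancel, bar_zero h] at this
  exact (neg_eq_of_add_eq_zero_right this.symm).symm

theorem bar_sub (h : IsStructurable k A bar) (a b : A) : bar (a - b) = bar a - bar b := by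
  rw [sub_eq_add_neg, h.1, bar_neg h, sub_eq_add_neg]

theorem bar_one (h : IsStructurable k A bar) : bar 1 = 1 := by
  have := h.2.2.1 1 (bar 1)
  simp only [one_mul, h.2.2.2.1, mul_one] at this
  exact this.symm

theorem bar_zsmul (h : IsStructurable k A bar) (n : ℤ) (a : A) : bar (n • a) = n • bar a := by
  rw [← Int.cast_smul_eq_zsmul k, h.2.1, Int.cast_smul_eq_zsmul]

/-- skew alternativity, first form -/
theorem skewalt (h2 : (2 : k) ≠ 0) (h3 : (3 : k) ≠ 0) (h : IsStructurable k A bar)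
    {s : A} (hs : bar s = -s) (x y : A) :
    s * x * y - s * (x * y) + (x * s * y - x * (s * y)) = 0 := by
  apply cancel6 h2 h3
  have key : ∀ a b c d e : A, strTrip bar a b (strTrip bar c d e) - strTrip bar c d (strTrip bar a b e)
      - (strTrip bar (strTrip bar a b c) d e - strTrip bar c (strTrip bar b a d) e) = 0 :=
    fun a b c d e => sub_eq_zero.mpr (h.2.2.2.2 a b c d e)
  have keyb : ∀ a b c d e : A, bar (strTrip bar a b (strTrip bar c d e) - strTrip bar c d (strTrip bar a b e)
      - (strTrip bar (strTrip bar a b c) d e - strTrip bar c (strTrip bar b a d) e)) = 0 :=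
    fun a b c d e => by rw [key, bar_zero h]
  have e1 := key (bar y) 1 1 s x
  have e2 := keyb s 1 1 x y
  have e3 := keyb s x (bar y) 1 1
  have e4 := keyb s (bar x) 1 (bar y) 1
  have e5 := keyb 1 (bar x) s 1 y
  have e6 := key 1 s (bar x) y 1
  have e7 := key 1 (bar x) 1 (bar y) s
  have e8 := key 1 (bar x) 1 y s
  have e9 := key 1 s 1 (bar y) (bar x)
  have e10 := keyb s 1 (bar x) (bar y) 1
  have e11 := keyb x (bar y) 1 s 1
  have e12 := keyb 1 y x s 1
  have e13 := key s 1 y 1 (bar x)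
  have e14 := key s 1 1 x (bar y)
  have e15 := keyb s 1 y 1 x
  have e16 := keyb s (bar x) y 1 1
  clear key keyb
  simp only [strTrip, h.1, bar_sub h, bar_neg h, h.2.2.1, h.2.2.2.1, bar_one h, hs, mul_one, one_mul,
    add_mul, mul_add, sub_mul, mul_sub, neg_mul, mul_neg, neg_neg]
    at e1 e2 e3 e4 e5 e6 e7 e8 e9 e10 e11 e12 e13 e14 e15 e16
  linear_combination (norm := module) (5 : ℤ) • e1 + (2 : ℤ) • e2 + (2 : ℤ) • e3 + e4 + (3 : ℤ) • e5
    - e6 - (2 : ℤ) • e7 - (2 : ℤ) • e8 + (2 : ℤ) • e9 + (2 : ℤ) • e10 + (2 : ℤ) • e11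
    - (2 : ℤ) • e12 - (2 : ℤ) • e13 + e14 + (4 : ℤ) • e15 - (2 : ℤ) • e16

/-- skew alternativity, second form -/
theorem skewalt' (h2 : (2 : k) ≠ 0) (h3 : (3 : k) ≠ 0) (h : IsStructurable k A bar)
    {s : A} (hs : bar s = -s) (x y : A) :
    x * y * s - x * (y * s) + (x * s * y - x * (s * y)) = 0 := by
  have e := congrArg bar (skewalt h2 h3 h hs (bar y) (bar x))
  simp only [h.1, bar_sub h, bar_neg h, h.2.2.1, h.2.2.2.1, hs, bar_zero h, neg_mul, mul_neg] at e
  linear_combination (norm := module) e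

theorem J4 (x y z : A) : strTrip bar x y z - strTrip bar z y x = strPsi bar x z * y := by
  simp only [strTrip, strPsi, sub_mul]; abel

theorem psi_skew (h : IsStructurable k A bar) (x y : A) :
    bar (strPsi bar x y) = - strPsi bar x y := by
  simp only [strPsi, bar_sub h, h.2.2.1, h.2.2.2.1]; abel

/-- degree three form of J3 -/
theorem J3one (h2 : (2 : k) ≠ 0) (h3 : (3 : k) ≠ 0) (h : IsStructurable k A bar)
    {s : A} (hs : bar s = -s) (a b : A) :
    strTrip bar a b s + s * strTrip bar b a 1 = strPsi bar (s * b) a := by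
  apply cancel2 h2
  have w := skewalt h2 h3 h hs
  have w' := skewalt' h2 h3 h hs
  -- split into hermitian and skew parts
  have f : ∀ u v : A, bar u = -u → (s * u * v - s * (u * v)) + (s * v * u - s * (v * u)) = 0 := by
    intro u v hu
    have p1 := skewalt h2 h3 h hu s v
    have p2 := skewalt' h2 h3 h hu s v
    linear_combination (norm := module) p2 - p1 + w u v
  have f1 := f (a - bar a) b (by simp only [bar_sub h, h.2.2.2.1]; abel)
  have f2 := f (a - bar a) (bar b) (by simp only [bar_sub h, h.2.2.2.1]; abel)
  have f3 := f (b - bar b) a (by simp only [bar_sub h, h.2.2.2.1]; abel)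
  have f4 := f (b - bar b) (bar a) (by simp only [bar_sub h, h.2.2.2.1]; abel)
  have g1 := w a (bar b)
  have g2 := w' a (bar b)
  simp only [strTrip, strPsi, h.1, bar_sub h, bar_neg h, h.2.2.1, h.2.2.2.1, bar_one h, hs, mul_one,
    one_mul, add_mul, mul_add, sub_mul, mul_sub, neg_mul, mul_neg, neg_neg]
    at f1 f2 f3 f4 g1 g2 ⊢
  linear_combination (norm := module) f1 + f2 - f3 - f4 + (2 : ℤ) • g2 - (2 : ℤ) • g1

theorem J3 (h2 : (2 : k) ≠ 0) (h3 : (3 : k) ≠ 0) (h : IsStructurable k A bar)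
    {s : A} (hs : bar s = -s) (a b z : A) :
    strTrip bar a b (s * z) + s * strTrip bar b a z = strPsi bar (s * b) a * z := by
  have L : ∀ z, s * z + s * z = strTrip bar s z 1 - strTrip bar 1 z s := by
    intro z; rw [J4]; simp only [strPsi, bar_one h, hs]; simp [add_mul]
  have gen : ∀ z, (strTrip bar a b (s * z) + s * strTrip bar b a z)
        + (strTrip bar a b (s * z) + s * strTrip bar b a z)
      = (strPsi bar s (strTrip bar a b 1) + strPsi bar (strTrip bar a b s) 1) * z := by
    intro z
    have l1 := L z
    have l2 := L (strTrip bar b a z)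
    have l3 : strTrip bar a b (s * z) + strTrip bar a b (s * z)
        = strTrip bar a b (strTrip bar s z 1) - strTrip bar a b (strTrip bar 1 z s) := by
      have c1 : ∀ p q, strTrip bar a b (p + q) = strTrip bar a b p + strTrip bar a b q := by
        intro p q; simp only [strTrip, mul_add, add_mul]; abel
      have c2 : ∀ p q, strTrip bar a b (p - q) = strTrip bar a b p - strTrip bar a b q := by
        intro p q; simp only [strTrip, mul_sub, sub_mul]; abel
      rw [← c1, ← c2, l1]
    have a1 := h.2.2.2.2 a b s z 1
    have a2 := h.2.2.2.2 a b 1 z s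
    have j1 := J4 (bar := bar) s z (strTrip bar a b 1)
    have j2 := J4 (bar := bar) (strTrip bar a b s) z 1
    rw [add_mul]
    linear_combination (norm := module) l3 + a1 - a2 + j1 + j2 + l2
  have e1 := gen 1
  rw [mul_one, mul_one, J3one h2 h3 h hs] at e1
  apply cancel2 h2
  rw [gen z, ← e1, add_mul]

theorem J2 (h2 : (2 : k) ≠ 0) (h3 : (3 : k) ≠ 0) (h : IsStructurable k A bar)
    {s : A} (hs : bar s = -s) (a b z : A) :
    strTrip bar a (s * b) z - strTrip bar b (s * a) z = - (strPsi bar a b * (s * z)) := by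
  have L : ∀ z, s * z + s * z = strTrip bar s z 1 - strTrip bar 1 z s := by
    intro z; rw [J4]; simp only [strPsi, bar_one h, hs]; simp [add_mul]
  have c1 : ∀ a p q z, strTrip bar a (p + q) z = strTrip bar a p z + strTrip bar a q z := by
    intro a p q z; simp only [strTrip, h.1, mul_add, add_mul]; abel
  have c2 : ∀ a p q z, strTrip bar a (p - q) z = strTrip bar a p z - strTrip bar a q z := by
    intro a p q z; simp only [strTrip, bar_sub h, mul_sub, sub_mul]; abel
  have l1 : ∀ a b, strTrip bar a (s * b) z + strTrip bar a (s * b) z =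
      strTrip bar a (strTrip bar s b 1) z - strTrip bar a (strTrip bar 1 b s) z := by
    intro a b; rw [← c1, ← c2, L]
  have m1 := l1 a b
  have m2 := l1 b a
  have a1 := h.2.2.2.2 b s a 1 z
  have a2 := h.2.2.2.2 b 1 a s z
  have a3 := h.2.2.2.2 a s b 1 z
  have a4 := h.2.2.2.2 a 1 b s z
  have d : ∀ p q w, strTrip bar p w z - strTrip bar q w z = strTrip bar (p - q) w z := by
    intro p q w; simp only [strTrip, bar_sub h, mul_sub, sub_mul]; abel
  have d1 := d (strTrip bar b s a) (strTrip bar a s b) 1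
  have d2 := d (strTrip bar b 1 a) (strTrip bar a 1 b) s
  rw [J4] at d1 d2
  rw [mul_one] at d2
  have hp := psi_skew h b a
  have hpn : strPsi bar a b = - strPsi bar b a := by simp only [strPsi]; abel
  rw [hpn]
  generalize strPsi bar b a = p at *
  have g : strTrip bar (p * s) 1 z - strTrip bar p s z = p * (s * z) + p * (s * z) := by
    have w1 := skewalt' h2 h3 h hs z p
    have w2 := skewalt h2 h3 h hs z p
    have w3 := skewalt h2 h3 h hp s z
    have w4 := skewalt' h2 h3 h hp s z
    have w5 := skewalt' h2 h3 h hp z s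
    simp only [strTrip, h.1, bar_sub h, bar_neg h, h.2.2.1, h.2.2.2.1, bar_one h, hs, hp, mul_one,
    one_mul, neg_mul, mul_neg, neg_neg]
    linear_combination (norm := module) w5 - (2 : ℤ) • w1 + (2 : ℤ) • w3 - (2 : ℤ) • w4 + (2 : ℤ) • w2
  apply cancel2 h2
  rw [neg_mul, neg_neg, ← g, ← d1, ← d2]
  linear_combination (norm := module) m1 - m2 + a1 - a2 - a3 + a4

/-- `L_s L_ŝ = -1`. -/
theorem skew_inv (h2 : (2 : k) ≠ 0) (h3 : (3 : k) ≠ 0) (h : IsStructurable k A bar)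
    {s t : A} (hs : bar s = -s) (ht : bar t = -t) (hst : ∀ z, strTrip bar s t z = z) (z : A) :
    s * (t * z) = -z ∧ t * (s * z) = -z := by
  have o1 : t * s = -1 := by
    have := hst 1
    simp only [strTrip, hs, ht, mul_neg, neg_mul, mul_one, one_mul, sub_neg_eq_add] at this
    linear_combination (norm := module) -this
  have o2 : s * t = -1 := by
    have := congrArg bar o1
    rw [h.2.2.1, hs, ht, bar_neg h, bar_one h, neg_mul_neg] at this
    exact this
  have o3 := hst z
  simp only [strTrip, hs, ht, mul_neg, neg_mul, sub_neg_eq_add, o2, one_mul, neg_neg] at o3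
  have w1 := skewalt' h2 h3 h hs z t
  have w2 := skewalt h2 h3 h hs z t
  have w3 := skewalt h2 h3 h ht s z
  have w4 := skewalt' h2 h3 h ht s z
  have w5 := skewalt' h2 h3 h ht z s
  simp only [o1, o2, mul_neg, neg_mul, mul_one, one_mul] at w1 w2 w3 w4 w5
  constructor
  · apply cancel2 h2
    linear_combination (norm := module) (2 : ℤ) • w2 - (2 : ℤ) • w4 - w5 - o3
  · apply cancel2 h2
    linear_combination (norm := module) (2 : ℤ) • w4 - (2 : ℤ) • w3 - (2 : ℤ) • w2 + w5 + o3


theorem T1 (h : IsStructurable k A bar) (c : k) (a b z : A) :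
    strTrip bar (c • a) b z = c • strTrip bar a b z := by
  simp only [strTrip, h.2.1, smul_mul_assoc, mul_smul_comm, smul_add, smul_sub]

theorem T2 (h : IsStructurable k A bar) (c : k) (a b z : A) :
    strTrip bar a (c • b) z = c • strTrip bar a b z := by
  simp only [strTrip, h.2.1, smul_mul_assoc, mul_smul_comm, smul_add, smul_sub]

theorem T3 (c : k) (a b z : A) :
    strTrip bar a b (c • z) = c • strTrip bar a b z := by
  simp only [strTrip, smul_mul_assoc, mul_smul_comm, smul_add, smul_sub]

theorem P1 (h : IsStructurable k A bar) (c : k) (a b : A) :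
    strPsi bar (c • a) b = c • strPsi bar a b := by
  simp only [strPsi, h.2.1, smul_mul_assoc, mul_smul_comm, smul_sub]

theorem P2 (h : IsStructurable k A bar) (c : k) (a b : A) :
    strPsi bar a (c • b) = c • strPsi bar a b := by
  simp only [strPsi, h.2.1, smul_mul_assoc, mul_smul_comm, smul_sub]

/-- the conjugate inverse relation is symmetric -/
theorem inv_symm (h3 : (3 : k) ≠ 0) (h : IsStructurable k A bar)
    {x y : A} (hxy : ∀ z, strTrip bar x y z = z) (z : A) : strTrip bar y x z = z := by
  have e := h.2.2.2.2 x y 1 z 1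
  simp only [hxy, sub_self] at e
  have d : strTrip bar 1 (strTrip bar y x z - z) 1 = 0 := by
    have c2 : ∀ p q, strTrip bar 1 (p - q) 1 = strTrip bar 1 p 1 - strTrip bar 1 q 1 := by
      intro p q; simp only [strTrip, bar_sub h, mul_sub, sub_mul]; abel
    rw [c2]; linear_combination (norm := module) e
  generalize hu : strTrip bar y x z - z = u at d
  simp only [strTrip, bar_one h, mul_one, one_mul] at d
  have d' := congrArg bar d
  simp only [h.1, bar_sub h, h.2.2.2.1, bar_zero h] at d'
  have : (3 : k) • u = 0 := by
    linear_combination (norm := module) d + (2 : ℤ) • d'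
  have hu0 := (smul_eq_zero.mp this).resolve_left h3
  rw [hu0] at hu
  exact sub_eq_zero.mp hu

theorem q_skew (h : IsStructurable k A bar) (x s : A) :
    bar (strQ k bar x s) = - strQ k bar x s := by
  rw [strQ, h.2.1, psi_skew h, smul_neg]

/-- the core computation -/
theorem core (h2 : (2 : k) ≠ 0) (h3 : (3 : k) ≠ 0) (h : IsStructurable k A bar)
    {x y s t : A} (hxy : ∀ z, strTrip bar x y z = z) (hyx : ∀ z, strTrip bar y x z = z)
    (hs : bar s = -s) (ht : bar t = -t) (hst : ∀ z, s * (t * z) = -z)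
    (hts : ∀ z, t * (s * z) = -z) (z : A) :
    strQ k bar x s * (strQ k bar y t * z) = -z := by
  have h6 : (6 : k) ≠ 0 := by
    have : (6 : k) = 2 * 3 := by norm_num
    rw [this]; exact mul_ne_zero h2 h3
  have ax := h.2.2.2.2
  -- ψ(ty,x) = 2t
  have p1 : ∀ z, strPsi bar (t * y) x * z = (2 : k) • (t * z) := by
    intro z
    have := J3 h2 h3 h ht x y z
    rw [hxy, hyx] at this
    rw [← this]; module
  have p2 : strTrip bar (t * y) y x = (3 : k) • (t * y) := by
    have := J4 (bar := bar) (t * y) y x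
    rw [hxy, p1] at this
    linear_combination (norm := module) this
  set w := strTrip bar y (t * y) y with hw
  have p3 : ∀ z, strTrip bar w x z = (3 : k) • strTrip bar y (t * y) z := by
    intro z
    have := ax y (t * y) y x z
    rw [hyx, hyx, p2, T2 h] at this
    linear_combination (norm := module) -this
  have p4 : ∀ z, strTrip bar x w z = (3 : k) • strTrip bar (t * y) y z := by
    intro z
    have := ax (t * y) y x y z
    rw [hxy, hxy, p2, T1 h] at this
    linear_combination (norm := module) this
  set t' := strQ k bar y t with ht'
  have t'S : bar t' = -t' := q_skew h y t
  have t'x : t' * x = -((3 : k)⁻¹ • w) := by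
    have := J4 (bar := bar) y x w
    rw [hyx, p3, ← hw] at this
    rw [ht', strQ, smul_mul_assoc, ← hw, ← this]
    have e : (3 : k)⁻¹ = (6 : k)⁻¹ * 2 := by field_simp; norm_num
    rw [e]; module
  have t'x' : t' * x = (-(3 : k)⁻¹) • w := by rw [t'x, neg_smul]
  have i3 : (3 : k)⁻¹ * 3 = 1 := inv_mul_cancel₀ h3
  -- replacements
  have r1 : ∀ z, strTrip bar (t' * x) x z = - strTrip bar y (t * y) z := by
    intro z; rw [t'x', T1 h, p3, smul_smul, neg_mul, i3, neg_one_smul]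
  have r2 : ∀ z, strTrip bar x (t' * x) z = - strTrip bar (t * y) y z := by
    intro z; rw [t'x', T2 h, p4, smul_smul, neg_mul, i3, neg_one_smul]
  have r3 : strTrip bar x (t' * x) x = (-3 : k) • (t * y) := by
    rw [r2, p2]; module
  have psi0 : ∀ z, strTrip bar y (t * y) (s * z) + s * strTrip bar (t * y) y z = 0 := by
    intro z
    rw [J3 h2 h3 h hs y (t * y) z, hst]
    simp [strPsi, bar_neg h]
  -- {t'x, x, sx} = -3y
  have m1 : strTrip bar (t' * x) x (s * x) = (-3 : k) • y := by
    rw [r1]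
    have := psi0 x
    rw [p2, mul_smul_comm, hst] at this
    linear_combination (norm := module) -this
  have b0 : ∀ z, strPsi bar (s * x) (t' * x) * z = 0 := by
    intro z
    rw [← J3 h2 h3 h hs (t' * x) x z, r1, r2, mul_neg]
    linear_combination (norm := module) -psi0 z
  have m2 : strTrip bar (s * x) x (t' * x) = (-3 : k) • y := by
    have := J4 (bar := bar) (s * x) x (t' * x)
    rw [b0, m1] at this
    exact sub_eq_zero.mp this
  have b0' : ∀ z, strPsi bar (t' * x) (s * x) * z = 0 := by
    intro z
    have : strPsi bar (t' * x) (s * x) = - strPsi bar (s * x) (t' * x) := by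
      simp only [strPsi]; abel
    rw [this, neg_mul, b0, neg_zero]
  set v := strTrip bar x (s * x) x with hv
  have m3 : t' * v = (3 : k) • y := by
    have := J3 h2 h3 h t'S (s * x) x x
    rw [b0', m2, ← hv] at this
    linear_combination (norm := module) this
  have m4 : strTrip bar (t * y) (s * x) z = z := by
    have := J2 h2 h3 h hs (t * y) x z
    rw [p1, hts, hst] at this
    have e : strTrip bar x (-y) z = -z := by
      have := T2 h (-1) x y z
      rw [neg_one_smul, neg_one_smul, hxy] at this
      exact this
    rw [e] at this
    linear_combination (norm := module) this
  have m5 : strTrip bar v (t' * x) z = (-3 : k) • z := by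
    have a1 := ax x (s * x) x (t' * x) z
    have a2 := ax x (t' * x) x (s * x) z
    rw [m2, T2 h, hxy, ← hv] at a1
    rw [m1, T2 h, hxy, r3, T1 h, m4] at a2
    linear_combination (norm := module) -a1 - a2
  have fin := J2 h2 h3 h t'S x v z
  rw [m3, m5, T2 h, hxy] at fin
  rw [strQ, ← hv, smul_mul_assoc]
  have f2 : strPsi bar x v * (t' * z) = (6 : k) • (-z) := by
    linear_combination (norm := module) fin
  rw [f2, smul_smul, inv_mul_cancel₀ h6, one_smul]

/-- For skew elements, `L_s L_t = L_t L_s = -1` gives `V_{s,t} = id`. -/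
theorem skew_inv_conv (h2 : (2 : k) ≠ 0) (h3 : (3 : k) ≠ 0) (h : IsStructurable k A bar)
    {s t : A} (hs : bar s = -s) (ht : bar t = -t) (hst : ∀ z, s * (t * z) = -z)
    (hts : ∀ z, t * (s * z) = -z) (z : A) : strTrip bar s t z = z := by
  have o1 : t * s = -1 := by simpa using hts 1
  have o2 : s * t = -1 := by simpa using hst 1
  have q1 := congrArg bar (hst (bar z))
  have q2 := congrArg bar (hts (bar z))
  simp only [h.2.2.1, h.2.2.2.1, hs, ht, mul_neg, neg_mul, neg_neg, bar_neg h] at q1 q2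
  simp only [strTrip, hs, ht, mul_neg, neg_mul, o2, q1, q2]
  simp

end StrAux

/-- Let `A` be a structurable division algebra over a field `k` with
`char k ≠ 2, 3`, let `0 ≠ x ∈ A` with conjugate inverse `x̂`, and let `0 ≠ s ∈ S` with
conjugate inverse `ŝ ∈ S`.  Then `q_x(s) ≠ 0` and its conjugate inverse is `q_{x̂}(ŝ)`;
equivalently, `q_x(s)·(q_{x̂}(ŝ)·z) = q_{x̂}(ŝ)·(q_x(s)·z) = −z` for all `z ∈ A`. -/
theorem stmt12 {k : Type*} [Field k] {A : Type*} [NonAssocRing A] [Module k A]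
    [SMulCommClass k A A] [IsScalarTower k A A] [FiniteDimensional k A] [Nontrivial A]
    (h2 : (2 : k) ≠ 0) (h3 : (3 : k) ≠ 0)
    (bar : A → A) (hstr : IsStructurable k A bar) (hdiv : IsConjDivision bar)
    (x : A) (hx0 : x ≠ 0) (xhat : A) (hxhat : ∀ z : A, strTrip bar x xhat z = z)
    (s : A) (hs0 : s ≠ 0) (hsS : bar s = -s)
    (shat : A) (hshatS : bar shat = -shat)
    (hshat : ∀ z : A, strTrip bar s shat z = z) :
    strQ k bar x s ≠ 0 ∧
    (∀ z : A, strTrip bar (strQ k bar x s) (strQ k bar xhat shat) z = z) ∧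
    ∀ z : A, strQ k bar x s * (strQ k bar xhat shat * z) = -z ∧
      strQ k bar xhat shat * (strQ k bar x s * z) = -z := by
  obtain hyx := StrAux.inv_symm h3 hstr hxhat
  have si := StrAux.skew_inv h2 h3 hstr hsS hshatS hshat
  have c1 := StrAux.core h2 h3 hstr hxhat hyx hsS hshatS (fun z => (si z).1) (fun z => (si z).2)
  have c2 := StrAux.core h2 h3 hstr hyx hxhat hshatS hsS (fun z => (si z).2) (fun z => (si z).1)
  refine ⟨?_, ?_, fun z => ⟨c1 z, c2 z⟩⟩
  · intro h0
    have := c1 1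
    rw [h0, zero_mul] at this
    exact one_ne_zero (neg_eq_zero.mp this.symm)
  · exact StrAux.skew_inv_conv h2 h3 hstr (StrAux.q_skew hstr x s)
      (StrAux.q_skew hstr xhat shat) c1 c2
end

section
/- Let k be a field with char(k) ≠ 2 and char(k) ≠ 3, let E be a finite-dimensional unital associative k-algebra with a k-linear involution e ↦ ē, let W be a finite-dimensional unital left E-module, and let h : W × W → E be a k-bilinear hermitian form (h(α·v, β·w) = α·h(v,w)·β̄ and the involute of h(v,w) equals h(w,v) for all v,w ∈ W and α,β ∈ E). Let A := E ⊕ W be the hermitian structurable algebra with involution (e,w) ↦ (ē, w) and multiplication (e₁,w₁)·(e₂,w₂) := (e₁e₂ + h(w₂,w₁), e₂·w₁ + ē₁·w₂). Then every nonzero element of A is conjugate invertible (i.e. A is a structurable division algebra) if and only if E is a division algebra (every nonzero element of E is invertible) and for every 0 ≠ w ∈ W one has h(w,w) ≠ 0 and h(w,w) ≠ 1. -/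
/-- The multiplication of the hermitian structurable algebra `A = E ⊕ W`:
`(e₁,w₁)·(e₂,w₂) := (e₁e₂ + h(w₂,w₁), e₂·w₁ + ē₁·w₂)`. -/
def hermMul {E W : Type*} [Ring E] [AddCommGroup W] [Module E W]
    (barE : E → E) (h : W → W → E) (p q : E × W) : E × W :=
  (p.1 * q.1 + h q.2 p.2, q.1 • p.2 + barE p.1 • q.2)

/-- The involution of the hermitian structurable algebra: `(e,w)‾ := (ē, w)`. -/
def hermInv {E W : Type*} (barE : E → E) (p : E × W) : E × W :=
  (barE p.1, p.2)

/-- The triple product `V_{x,y}z := (x·ȳ)·z + (z·ȳ)·x − (z·x̄)·y` of the hermitian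
structurable algebra `A = E ⊕ W`. -/
def hermTrip {E W : Type*} [Ring E] [AddCommGroup W] [Module E W]
    (barE : E → E) (h : W → W → E) (x y z : E × W) : E × W :=
  hermMul barE h (hermMul barE h x (hermInv barE y)) z
    + hermMul barE h (hermMul barE h z (hermInv barE y)) x
    - hermMul barE h (hermMul barE h z (hermInv barE x)) y

theorem hermTrip_formula {E W : Type*} [Ring E] [AddCommGroup W] [Module E W]
    (barE : E → E)
    (hbadd : ∀ a b : E, barE (a + b) = barE a + barE b)
    (hbmul : ∀ a b : E, barE (a * b) = barE b * barE a)
    (hbinv : ∀ a : E, barE (barE a) = a)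
    (h : W → W → E)
    (haddr : ∀ v w w' : W, h v (w + w') = h v w + h v w')
    (hsesqr : ∀ (a : E) (v w : W), h v (a • w) = h v w * barE a)
    (hherm : ∀ v w : W, barE (h v w) = h w v) (a b c : E) (u v w : W) :
    hermTrip barE h (a, u) (b, v) (c, w) =
      (a * barE b * c + c * barE b * a - c * barE a * b + h u v * c
        + h w (barE b • u + barE a • v),
       c • (barE b • u + barE a • v) + (h u v + a * barE b) • w + h w v • u - h w u • v) := by
  ext
  · simp only [hermTrip, hermMul, hermInv, Prod.fst_add, Prod.fst_sub, hbadd, hbmul, hbinv,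
      haddr, hsesqr, hherm, add_mul]
    noncomm_ring
  · simp only [hermTrip, hermMul, hermInv, Prod.snd_add, Prod.snd_sub, hbadd, hbmul, hbinv,
      haddr, hsesqr, hherm, add_smul, smul_add, mul_smul]
    abel


/-- Let `k` be a field with `char k ≠ 2, 3`, `E` a finite-dimensional
unital associative `k`-algebra with `k`-linear involution `barE`, `W` a finite-dimensional
unital left `E`-module, and `h : W × W → E` a hermitian form.  Then the hermitian
structurable algebra `A := E ⊕ W` is a structurable division algebra (every nonzero
element is conjugate invertible) if and only if `E` is a division algebra and
`h(w,w) ≠ 0, 1` for every `0 ≠ w ∈ W`. -/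
theorem stmt13 {k : Type*} [Field k] (h2 : (2 : k) ≠ 0) (h3 : (3 : k) ≠ 0)
    {E : Type*} [Ring E] [Algebra k E] [FiniteDimensional k E]
    {W : Type*} [AddCommGroup W] [Module E W] [Module k W] [IsScalarTower k E W]
    [FiniteDimensional k W]
    (barE : E → E)
    (hbadd : ∀ a b : E, barE (a + b) = barE a + barE b)
    (hbsmul : ∀ (c : k) (a : E), barE (c • a) = c • barE a)
    (hbmul : ∀ a b : E, barE (a * b) = barE b * barE a)
    (hbinv : ∀ a : E, barE (barE a) = a)
    (h : W → W → E)
    (haddl : ∀ v v' w : W, h (v + v') w = h v w + h v' w)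
    (haddr : ∀ v w w' : W, h v (w + w') = h v w + h v w')
    (hsesql : ∀ (a : E) (v w : W), h (a • v) w = a * h v w)
    (hsesqr : ∀ (a : E) (v w : W), h v (a • w) = h v w * barE a)
    (hherm : ∀ v w : W, barE (h v w) = h w v) :
    (∀ a : E × W, a ≠ 0 → ∃ b : E × W, ∀ z : E × W, hermTrip barE h a b z = z)
      ↔ ((∀ e : E, e ≠ 0 → IsUnit e) ∧ ∀ w : W, w ≠ 0 → h w w ≠ 0 ∧ h w w ≠ 1) := by
  have hb1 : barE 1 = 1 := by
    have := hbmul (barE 1) 1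
    rw [mul_one, hbinv, mul_one] at this
    exact this.symm
  have hb0 : barE 0 = 0 := by
    have := hbadd 0 0
    simpa using this
  have hbneg : ∀ a, barE (-a) = - barE a := by
    intro a
    have := hbadd a (-a)
    rw [add_neg_cancel, hb0] at this
    exact (neg_eq_of_add_eq_zero_right this.symm).symm
  have hbsub : ∀ a b, barE (a - b) = barE a - barE b := by
    intro a b
    rw [sub_eq_add_neg, hbadd, hbneg, sub_eq_add_neg]
  have hr0 : ∀ v, h v 0 = 0 := by
    intro v
    have := haddr v 0 0
    simpa using this
  have hl0 : ∀ v, h 0 v = 0 := by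
    intro v
    have := haddl 0 0 v
    simpa using this
  have hrneg : ∀ v w, h v (-w) = - h v w := by
    intro v w
    have := haddr v w (-w)
    rw [add_neg_cancel, hr0] at this
    exact (neg_eq_of_add_eq_zero_right this.symm).symm
  have hE2 : ∀ y : E, 2 * y = 0 → y = 0 := by
    intro y hy
    have : (2 : k) • y = 0 := by rw [Algebra.smul_def, map_ofNat, hy]
    exact (smul_eq_zero.mp this).resolve_left h2
  have hE3 : ∀ y : E, 3 * y = 0 → y = 0 := by
    intro y hy
    have : (3 : k) • y = 0 := by rw [Algebra.smul_def, map_ofNat, hy]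
    exact (smul_eq_zero.mp this).resolve_left h3
  have F := hermTrip_formula barE hbadd hbmul hbinv h haddr hsesqr hherm
  constructor
  · intro H
    -- extraction of the four identities
    have X : ∀ (a : E) (u : W), (a, u) ≠ (0 : E × W) → ∃ (b : E) (v : W),
        (∀ c, a * barE b * c + c * barE b * a - c * barE a * b + h u v * c = c) ∧
        barE b • u + barE a • v = 0 ∧
        (∀ w, (h u v + a * barE b) • w + h w v • u - h w u • v = w) := by
      intro a u hau
      obtain ⟨⟨b, v⟩, hz⟩ := H (a, u) hau
      refine ⟨b, v, ?_, ?_, ?_⟩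
      · intro c
        have := congrArg Prod.fst (hz (c, 0))
        rw [F] at this
        simpa [hl0] using this
      · have := congrArg Prod.snd (hz (1, 0))
        rw [F] at this
        simpa [hl0] using this
      · intro w
        have := congrArg Prod.snd (hz (0, w))
        rw [F] at this
        simpa using this
    refine ⟨?_, ?_⟩
    · -- right inverses
      have R : ∀ a : E, a ≠ 0 → ∃ r, a * r = 1 := by
        intro a ha
        obtain ⟨b, v, e1, -, -⟩ := X a 0 (by simpa using ha)
        simp only [hl0, zero_mul, add_zero] at e1
        refine ⟨barE b, ?_⟩
        obtain ⟨x, hx⟩ : ∃ x, x = barE b * a - barE a * b := ⟨_, rfl⟩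
        have hs : a * barE b = 1 - x := by
          have := e1 1
          simp only [one_mul, mul_one] at this
          rw [hx]
          rw [← this]
          abel
        have hc : ∀ c, c * x = x * c := by
          intro c
          have := e1 c
          rw [hs] at this
          have t : c * x = c * barE b * a - c * barE a * b := by rw [hx]; noncomm_ring
          rw [t]
          have t2 : (1 - x) * c = c - x * c := by noncomm_ring
          rw [t2] at this
          have t3 := sub_eq_zero.mpr this
          rw [← sub_eq_zero, ← t3]
          abel
        have hxb : barE x = - x := by
          rw [hx, hbsub, hbmul, hbmul, hbinv, hbinv]
          abel
        have hs' : b * barE a = 1 + x := by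
          have := congrArg barE hs
          rw [hbmul, hbinv, hbsub, hb1, hxb] at this
          rw [this]
          abel
        -- `b̄ (1 - 2x) = ā b b̄`
        have g1 : barE a * b * barE b = barE b * (1 - 2 * x) := by
          have t : barE a * b = barE b * a - x := by rw [hx]; abel
          rw [t, sub_mul, mul_assoc, hs, ← hc]
          noncomm_ring
        have g2 : x * (b * barE b) = 0 := by
          apply hE3
          have t : b * (barE a * b * barE b) = (1 + x) * (b * barE b) := by
            rw [← hs']; noncomm_ring
          rw [g1] at t
          have t4 : b * (barE b * (1 - 2 * x)) = b * barE b - 2 * (x * (b * barE b)) := by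
            rw [← hc]; noncomm_ring
          rw [t4] at t
          have t5 := sub_eq_zero.mpr t.symm
          rw [← t5]
          noncomm_ring
        have g3 : x * ((1 - x) * (1 - 2 * x)) = 0 := by
          have t : a * (barE a * b * barE b) = (1 - x) * (1 - 2 * x) := by
            rw [g1, ← mul_assoc, hs]
          rw [← t]
          have : x * (a * (barE a * b * barE b)) = a * barE a * (x * (b * barE b)) := by
            calc x * (a * (barE a * b * barE b)) = x * (a * barE a) * (b * barE b) := by
                  noncomm_ring
              _ = a * barE a * x * (b * barE b) := by rw [hc (a * barE a)]
              _ = _ := by noncomm_ring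
          rw [this, g2, mul_zero]
        have hb2 : barE (2 * x) = - (2 * x) := by
          rw [two_mul, hbadd, hxb]; abel
        have g4 := congrArg barE g3
        rw [hbmul, hbmul, hbsub, hbsub, hb1, hxb, hb0, hb2] at g4
        have g5 : x * x = 0 := by
          apply hE2
          apply hE3
          have : 3 * (2 * (x * x)) =
            - (x * ((1 - x) * (1 - 2 * x))) - ((1 - -(2 * x)) * (1 - -x) * -x) := by
            noncomm_ring
          rw [this, g3, g4]
          simp
        have g6 : x = 0 := by
          have : x * ((1 - x) * (1 - 2 * x)) = x - 3 * (x * x) + 2 * ((x * x) * x) := by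
            noncomm_ring
          rw [g3, g5] at this
          simpa using this.symm
        rw [hs, g6, sub_zero]
      intro e he
      obtain ⟨r, hr⟩ := R e he
      have hr0' : r ≠ 0 := by
        rintro rfl
        rw [mul_zero] at hr
        exact he (by rw [← mul_one e, ← hr, mul_zero])
      obtain ⟨s, hs⟩ := R r hr0'
      have hes : e = s := by
        calc e = e * (r * s) := by rw [hs, mul_one]
          _ = s := by rw [← mul_assoc, hr, one_mul]
      exact ⟨⟨e, r, hr, by rw [hes]; exact hs⟩, rfl⟩
    · intro u hu
      constructor
      · intro hN
        obtain ⟨b, v, e1, -, e4⟩ := X 0 u (by simpa using hu)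
        have k1 : h u v = 1 := by simpa [hb0] using e1 1
        have := e4 u
        rw [hN, k1] at this
        simp at this
        exact hu this
      · intro hN
        obtain ⟨b, v, e1, e3, -⟩ := X 1 u (by simp [hu])
        rw [hb1, one_smul] at e3
        have hv : v = - (barE b • u) := (neg_eq_of_add_eq_zero_right e3).symm
        have k1 : h u v = - b := by rw [hv, hrneg, hsesqr, hN, hbinv, one_mul]
        have k2 := e1 1
        rw [k1, hb1] at k2
        simp only [one_mul, mul_one] at k2
        have k3 := congrArg barE k2
        simp only [hbadd, hbsub, hbneg, hbinv, hb1] at k3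
        have k4 : (1 : E) = 0 := by
          apply hE2
          rw [two_mul]
          nth_rewrite 1 [← k2]
          rw [← k3]
          abel
        exact hu (by rw [← one_smul E u, k4, zero_smul])
  · rintro ⟨hD, hW⟩ ⟨a, u⟩ hau
    have hne : a * barE a - h u u ≠ 0 := by
      intro h0
      by_cases ha : a = 0
      · subst ha
        have hu : u ≠ 0 := by
          rintro rfl
          exact hau rfl
        apply (hW u hu).1
        simpa using h0
      · obtain ⟨⟨a, r, har, hra⟩, rfl⟩ := hD a ha
        simp only at h0 ha hau
        have hrb : barE a * barE r = 1 := by rw [← hbmul, hra, hb1]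
        have h1 : h (r • u) (r • u) = 1 := by
          rw [hsesql, hsesqr, ← sub_eq_zero.mp h0]
          calc r * (a * barE a * barE r) = (r * a) * (barE a * barE r) := by noncomm_ring
            _ = 1 := by rw [hra, hrb, one_mul]
        by_cases hu : r • u = 0
        · rw [hu, hl0] at h1
          exact ha (by rw [← mul_one a, ← h1, mul_zero])
        · exact (hW _ hu).2 h1
    obtain ⟨⟨q, p, hqp, hpq⟩, hq⟩ := hD _ hne
    simp only at hq
    have hqb : barE q = q := by
      rw [hq, hbsub, hbmul, hbinv, hherm]
    have hpb : barE p = p := by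
      have : q * barE p = 1 := by
        have := congrArg barE hpq
        rwa [hbmul, hqb, hb1] at this
      calc barE p = (p * q) * barE p := by rw [hpq, one_mul]
        _ = p := by rw [mul_assoc, this, mul_one]
    refine ⟨(p * a, - (p • u)), ?_⟩
    rintro ⟨c, w⟩
    have e3 : barE (p * a) • u + barE a • -(p • u) = 0 := by
      rw [hbmul, hpb, mul_smul, smul_neg, add_neg_cancel]
    have e5 : a * barE (p * a) + h u (-(p • u)) = 1 := by
      rw [hbmul, hpb, hrneg, hsesqr, hpb, ← hqp, hq]
      noncomm_ring
    rw [F, e3, hr0]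
    ext
    · have : a * barE (p * a) * c + c * barE (p * a) * a - c * barE a * (p * a)
          + h u (-(p • u)) * c + 0 = (a * barE (p * a) + h u (-(p • u))) * c
            + (c * barE (p * a) * a - c * barE a * (p * a)) := by noncomm_ring
      simp only
      rw [this, e5, hbmul, hpb]
      noncomm_ring
    · simp only
      rw [add_comm (h u _), e5, hrneg, hsesqr, hpb, smul_zero, one_smul, neg_smul, smul_neg,
        mul_smul]
      abel
end

section
/- Let D be a division ring whose center has characteristic ≠ 2, equipped with an involution σ, let V be a right D-module, and let h : V × V → D be an anisotropic skew-hermitian form. Let V̂ := D ⊕ V ⊕ D with the form ĥ((a,v,b),(c,w,d)) := σ(a)·d − σ(b)·c + h(v,w), and let w₀ := (1,0,0). Then: (1) for every pair (z,s) ∈ V × D with h(z,z) = s − σ(s), the map α_{z,s} : V̂ → V̂ defined by α_{z,s}(a,v,b) := (a + h(z,v) + s·b, v + z·b, b) is a right D-linear bijection satisfying ĥ(α_{z,s}(ξ), α_{z,s}(η)) = ĥ(ξ,η) for all ξ,η ∈ V̂; and (2) conversely, if φ : V̂ → V̂ is a right D-linear map with ĥ(φ(ξ),φ(η)) = ĥ(ξ,η)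 for all ξ,η ∈ V̂, such that φ(w₀) = w₀, φ(D ⊕ V ⊕ 0) ⊆ D ⊕ V ⊕ 0, φ(ξ) − ξ ∈ D ⊕ 0 ⊕ 0 for all ξ ∈ D ⊕ V ⊕ 0, and φ(ξ) − ξ ∈ D ⊕ V ⊕ 0 for all ξ ∈ V̂, then φ = α_{z,s} for some (z,s) ∈ V × D with h(z,z) = s − σ(s). -/
open MulOpposite

/-- The componentwise right `D`-action on `V̂ = D ⊕ V ⊕ D`:
`(a, v, b)·d := (a·d, v·d, b·d)`. -/
def ract {D V : Type*} [Ring D] [AddCommGroup V] [Module Dᵐᵒᵖ V]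
    (ξ : D × V × D) (d : D) : D × V × D :=
  (ξ.1 * d, (op d) • ξ.2.1, ξ.2.2 * d)

/-- The skew-hermitian form `ĥ((a,v,b),(c,w,d)) := σ(a)·d − σ(b)·c + h(v,w)` on
`V̂ = D ⊕ V ⊕ D`. -/
def hhat {D V : Type*} [Ring D] [AddCommGroup V]
    (σ : D → D) (h : V → V → D) (ξ η : D × V × D) : D :=
  σ ξ.1 * η.2.2 - σ ξ.2.2 * η.1 + h ξ.2.1 η.2.1

/-- The root-group element `α_{z,s}(a,v,b) := (a + h(z,v) + s·b, v + z·b, b)`. -/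
def alphaMap {D V : Type*} [Ring D] [AddCommGroup V] [Module Dᵐᵒᵖ V]
    (h : V → V → D) (z : V) (s : D) (ξ : D × V × D) : D × V × D :=
  (ξ.1 + h z ξ.2.1 + s * ξ.2.2, ξ.2.1 + (op ξ.2.2) • z, ξ.2.2)

/-- Let `D` be a division ring whose center has characteristic `≠ 2`
(equivalently `(2 : D) ≠ 0`), with involution `σ`, let `V` be a right `D`-module (realized
as a module over `Dᵐᵒᵖ`), and let `h : V × V → D` be an anisotropic skew-hermitian form.
Let `V̂ := D ⊕ V ⊕ D` with the form `ĥ` and `w₀ := (1,0,0)`.  Then: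
(1) for every `(z,s) ∈ V × D` with `h(z,z) = s − σ(s)`, the map `α_{z,s}` is a right
`D`-linear bijection preserving `ĥ`; and (2) conversely, every right `D`-linear map
`φ : V̂ → V̂` preserving `ĥ` which fixes `w₀`, stabilizes `D ⊕ V ⊕ 0`, acts trivially on
`(D ⊕ V ⊕ 0)/(D ⊕ 0 ⊕ 0)` and on `V̂/(D ⊕ V ⊕ 0)`, equals `α_{z,s}` for some such
`(z,s)`. -/
theorem stmt15 {D V : Type*} [DivisionRing D] [AddCommGroup V] [Module Dᵐᵒᵖ V]
    (hchar : (2 : D) ≠ 0)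
    (σ : D → D)
    (hσadd : ∀ a b : D, σ (a + b) = σ a + σ b)
    (hσmul : ∀ a b : D, σ (a * b) = σ b * σ a)
    (hσinv : ∀ a : D, σ (σ a) = a)
    (h : V → V → D)
    (haddl : ∀ v v' w : V, h (v + v') w = h v w + h v' w)
    (haddr : ∀ v w w' : V, h v (w + w') = h v w + h v w')
    (hsesql : ∀ (a : D) (v w : V), h ((op a) • v) w = σ a * h v w)
    (hsesqr : ∀ (b : D) (v w : V), h v ((op b) • w) = h v w * b)
    (hskew : ∀ v w : V, σ (h v w) = -h w v)
    (haniso : ∀ v : V, h v v = 0 → v = 0) :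
    (∀ (z : V) (s : D), h z z = s - σ s →
      Function.Bijective (alphaMap h z s) ∧
      (∀ ξ η : D × V × D, alphaMap h z s (ξ + η) = alphaMap h z s ξ + alphaMap h z s η) ∧
      (∀ (ξ : D × V × D) (d : D), alphaMap h z s (ract ξ d) = ract (alphaMap h z s ξ) d) ∧
      (∀ ξ η : D × V × D, hhat σ h (alphaMap h z s ξ) (alphaMap h z s η) = hhat σ h ξ η))
    ∧
    (∀ φ : D × V × D → D × V × D,
      (∀ ξ η : D × V × D, φ (ξ + η) = φ ξ + φ η) →
      (∀ (ξ : D × V × D) (d : D), φ (ract ξ d) = ract (φ ξ) d) →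
      (∀ ξ η : D × V × D, hhat σ h (φ ξ) (φ η) = hhat σ h ξ η) →
      φ (1, 0, 0) = (1, 0, 0) →
      (∀ (a : D) (v : V), (φ (a, v, 0)).2.2 = 0) →
      (∀ (a : D) (v : V), (φ (a, v, 0)).2.1 = v) →
      (∀ ξ : D × V × D, (φ ξ).2.2 = ξ.2.2) →
      ∃ (z : V) (s : D), h z z = s - σ s ∧ φ = alphaMap h z s) := by
  have hσ0 : σ 0 = 0 := by simpa using hσadd 0 0
  have hσ1 : σ 1 = 1 := by
    have h1 := hσmul 1 (σ 1)
    simpa [hσinv] using h1.symm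
  have h0l : ∀ w, h 0 w = 0 := fun w => by simpa using haddl 0 0 w
  have h0r : ∀ w, h w 0 = 0 := fun w => by simpa using haddr w 0 0
  refine ⟨?_, ?_⟩
  · intro z s hz
    refine ⟨⟨?_, ?_⟩, ?_, ?_, ?_⟩
    · rintro ⟨a, v, b⟩ ⟨c, w, d⟩ he
      simp only [alphaMap, Prod.mk.injEq] at he
      obtain ⟨h1, h2, h3⟩ := he
      subst h3
      have h4 := add_right_cancel h2
      subst h4
      have h5 := add_right_cancel (add_right_cancel h1)
      subst h5
      rfl
    · rintro ⟨a, v, b⟩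
      refine ⟨(a - s * b - h z (v - (op b) • z), v - (op b) • z, b), ?_⟩
      simp [alphaMap]
    · rintro ⟨a, v, b⟩ ⟨c, w, d⟩
      simp only [alphaMap, Prod.mk_add_mk, haddr, mul_add, op_add, add_smul, Prod.mk.injEq]
      refine ⟨by abel, by abel, trivial⟩
    · rintro ⟨a, v, b⟩ d
      simp only [alphaMap, ract, hsesqr, add_mul, mul_assoc, op_mul, mul_smul, smul_add]
    · rintro ⟨a, v, b⟩ ⟨c, w, d⟩
      simp only [alphaMap, hhat, hσadd, hσmul, hskew, haddl, haddr, hsesql, hsesqr, hz]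
      noncomm_ring
  · intro φ hadd hlin hform hw _ hV hb
    obtain ⟨s, z, t, he⟩ : ∃ s z t, φ (0, 0, 1) = (s, z, t) := ⟨_, _, _, rfl⟩
    have ht : t = 1 := by simpa [he] using hb (0, 0, 1)
    subst ht
    have hz : h z z = s - σ s := by
      have h1 := hform (0, 0, 1) (0, 0, 1)
      simp only [he, hhat, hσ0, hσ1, h0l, mul_one, one_mul, mul_zero, sub_zero, add_zero] at h1
      rw [← sub_eq_zero, ← h1]
      abel
    refine ⟨z, s, hz, ?_⟩
    funext ⟨a, v, b⟩
    have e1 : φ (a, 0, 0) = (a, 0, 0) := by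
      have := hlin (1, 0, 0) a
      simpa [ract, hw] using this
    have e3 : φ (0, 0, b) = (s * b, (op b) • z, b) := by
      have := hlin (0, 0, 1) b
      simpa [ract, he] using this
    have e2 : φ (0, v, 0) = (h z v, v, 0) := by
      have h1 := hform (0, 0, 1) (0, v, 0)
      have h2 := hV 0 v
      have h3 := hb (0, v, 0)
      generalize φ (0, v, 0) = x at *
      obtain ⟨p, q, r⟩ := x
      simp only at h2 h3
      subst h2 h3
      simp only [he, hhat, hσ0, hσ1, h0l, one_mul, mul_zero, sub_zero, add_zero, zero_sub] at h1
      rw [neg_add_eq_zero.mp h1]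
    have e : ((a, v, b) : D × V × D) = (a, 0, 0) + (0, v, 0) + (0, 0, b) := by simp
    rw [e, hadd, hadd, e1, e2, e3]
    simp [alphaMap]
end
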